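/- With the notation of the coordinate setup: for all indices i, j ∈ {1,…,n} and at every point of W, ∂v_i/∂x^j = ∂v_j/∂x^i. -/

import Mathlib

/-- Partial derivative of a real function on `ℝⁿ × ℝⁿ` in the direction of the
`i`-th coordinate of the first factor (the `x`-coordinates). -/
noncomputable def pdx {n : ℕ} (g : (Fin n → ℝ) × (Fin n → ℝ) → ℝ)
    (i : Fin n) (p : (Fin n → ℝ) × (Fin n → ℝ)) : ℝ :=
  fderiv ℝ g p (Pi.single i 1, 0)

/-- Partial derivative of a real function on `ℝⁿ × ℝⁿ` in the direction of the
`j`-th coordinate of the second factor (the `y`-coordinates). -/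
noncomputable def pdy {n : ℕ} (g : (Fin n → ℝ) × (Fin n → ℝ) → ℝ)
    (j : Fin n) (p : (Fin n → ℝ) × (Fin n → ℝ)) : ℝ :=
  fderiv ℝ g p (0, Pi.single j 1)

/-! On the graph `w = ∇F(z)` the complex symplectic form `∑ dzᵏ ∧ dwₖ` vanishes because the Hessian
is symmetric. With `z = x + iu` and `w = y + iv`, its imaginary part is
`∑ dxᵏ ∧ dvₖ + duᵏ ∧ dyₖ`; on the pair `(∂/∂xⁱ, ∂/∂xʲ)`, where `dy = 0`, this reads
`∂vᵢ/∂xʲ - ∂vⱼ/∂xⁱ = 0`. -/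

open Filter Topology

theorem dotProduct_mulVec_comm_of_isSymm {ι R : Type*} [Fintype ι] [CommSemiring R]
    {A : Matrix ι ι R} (hA : A.IsSymm) (a b : ι → R) :
    a ⬝ᵥ A.mulVec b = b ⬝ᵥ A.mulVec a := by
  rw [Matrix.dotProduct_mulVec, ← Matrix.mulVec_transpose, hA.eq, dotProduct_comm]

theorem fderiv_comp_eq_id_of_eventually_rightInverse {𝕜 E E' : Type*} [NontriviallyNormedField 𝕜]
    [NormedAddCommGroup E] [NormedSpace 𝕜 E] [NormedAddCommGroup E'] [NormedSpace 𝕜 E']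
    {f : E → E'} {f' : E →L[𝕜] E'} {g : E' → E} {g' : E' →L[𝕜] E} {p : E'}
    (hf : HasFDerivAt f f' (g p)) (hg : HasFDerivAt g g' p) (hfg : ∀ᶠ q in 𝓝 p, f (g q) = q) :
    f'.comp g' = ContinuousLinearMap.id 𝕜 E' :=
  (hf.comp p hg).unique ((hasFDerivAt_id p).congr_of_eventuallyEq hfg)

section

variable {ι : Type*}

/-- The componentwise real part `ℂ^ι → ℝ^ι`, as a continuous real-linear map. -/
noncomputable def reVec : (ι → ℂ) →L[ℝ] (ι → ℝ) :=
  ContinuousLinearMap.piMap fun _ => Complex.reCLM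

/-- The componentwise imaginary part `ℂ^ι → ℝ^ι`, as a continuous real-linear map. -/
noncomputable def imVec : (ι → ℂ) →L[ℝ] (ι → ℝ) :=
  ContinuousLinearMap.piMap fun _ => Complex.imCLM

/-- The map `Φ(z) = (Re z, Re G(z))`, which gives the real coordinates `(x, y)` when `G = ∇F`. -/
noncomputable def realCoords (G : (ι → ℂ) → (ι → ℂ)) (z : ι → ℂ) : (ι → ℝ) × (ι → ℝ) :=
  (reVec z, reVec (G z))

theorem im_dotProduct [Fintype ι] (a b : ι → ℂ) :
    (a ⬝ᵥ b).im = reVec a ⬝ᵥ imVec b + imVec a ⬝ᵥ reVec b := by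
  simp [dotProduct, reVec, imVec, Complex.mul_im, Finset.sum_add_distrib]

variable {G : (ι → ℂ) → (ι → ℂ)} {L : (ι → ℂ) →L[ℝ] (ι → ℂ)}

theorem hasFDerivAt_realCoords [Finite ι] {z : ι → ℂ} (hG : HasFDerivAt G L z) :
    HasFDerivAt (realCoords G) (reVec.prod (reVec.comp L)) z := by
  cases nonempty_fintype ι
  exact reVec.hasFDerivAt.prodMk (reVec.hasFDerivAt.comp z hG)

theorem fderiv_im_comp_apply [Finite ι] {E : Type*} [NormedAddCommGroup E] [NormedSpace ℝ E]
    {f : E → ι → ℂ} {f' : E →L[ℝ] ι → ℂ} {p : E} (hG : HasFDerivAt G L (f p))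
    (hf : HasFDerivAt f f' p) (i : ι) (w : E) :
    fderiv ℝ (fun q => (G (f q) i).im) p w = imVec (L (f' w)) i := by
  cases nonempty_fintype ι
  have him : HasFDerivAt (fun q => imVec (G (f q))) (imVec.comp (L.comp f')) p :=
    imVec.hasFDerivAt.comp p (hG.comp p hf)
  exact DFunLike.congr_fun (hasFDerivAt_pi'.1 him i).fderiv w

variable {Ψ : (ι → ℝ) × (ι → ℝ) → (ι → ℂ)} {D : (ι → ℝ) × (ι → ℝ) →L[ℝ] (ι → ℂ)}
  {p : (ι → ℝ) × (ι → ℝ)}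

/-- The pullback of `∑ dxᵏ ∧ dvₖ + duᵏ ∧ dyₖ` along `q ↦ (Ψ q, G (Ψ q))` vanishes at `p`. -/
theorem lagrangian_identity [Fintype ι] (hG : HasFDerivAt G L (Ψ p))
    (hL : ∀ a b, (a ⬝ᵥ L b).im = (b ⬝ᵥ L a).im) (hΨ : HasFDerivAt Ψ D p)
    (hinv : ∀ᶠ q in 𝓝 p, realCoords G (Ψ q) = q) (w w' : (ι → ℝ) × (ι → ℝ)) :
    w.1 ⬝ᵥ imVec (L (D w')) + imVec (D w) ⬝ᵥ w'.2 =
      w'.1 ⬝ᵥ imVec (L (D w)) + imVec (D w') ⬝ᵥ w.2 := by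
  have hid := fderiv_comp_eq_id_of_eventually_rightInverse (hasFDerivAt_realCoords hG) hΨ hinv
  have hx (w) : reVec (D w) = w.1 := congrArg Prod.fst (DFunLike.congr_fun hid w)
  have hy (w) : reVec (L (D w)) = w.2 := congrArg Prod.snd (DFunLike.congr_fun hid w)
  simpa only [im_dotProduct, hx, hy] using hL (D w) (D w')

theorem lagrangian_rel_vx_symm_general [Fintype ι] [DecidableEq ι]
    (hG : HasFDerivAt G L (Ψ p)) (hL : ∀ a b, (a ⬝ᵥ L b).im = (b ⬝ᵥ L a).im)
    (hΨ : DifferentiableAt ℝ Ψ p) (hinv : ∀ᶠ q in 𝓝 p, realCoords G (Ψ q) = q) (i j : ι) :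
    fderiv ℝ (fun q => (G (Ψ q) i).im) p (Pi.single j 1, 0) =
      fderiv ℝ (fun q => (G (Ψ q) j).im) p (Pi.single i 1, 0) := by
  rw [fderiv_im_comp_apply hG hΨ.hasFDerivAt, fderiv_im_comp_apply hG hΨ.hasFDerivAt]
  simpa only [single_one_dotProduct, dotProduct_zero, add_zero] using
    lagrangian_identity hG hL hΨ.hasFDerivAt hinv (Pi.single i 1, 0) (Pi.single j 1, 0)

end

/-- `∂v_i/∂x^j = ∂v_j/∂x^i` on `W`. -/
theorem lagrangian_rel_vx_symm
    {n : ℕ} (hn : 1 ≤ n) (U : Set (Fin n → ℂ)) (hU : IsOpen U)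
    (F : (Fin n → ℂ) → ℂ) (gradF : (Fin n → ℂ) → (Fin n → ℂ))
    (hessF : (Fin n → ℂ) → Matrix (Fin n) (Fin n) ℂ)
    (hF : ∀ z ∈ U, ∃ L : (Fin n → ℂ) →L[ℂ] ℂ,
      HasFDerivAt F L z ∧ ∀ X, L X = ∑ k, gradF z k * X k)
    (hgrad : ∀ z ∈ U, ∃ L : (Fin n → ℂ) →L[ℂ] (Fin n → ℂ),
      HasFDerivAt gradF L z ∧ ∀ X, L X = (hessF z).mulVec X)
    (hsymm : ∀ z ∈ U, (hessF z).IsSymm)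
    (hnondeg : ∀ z ∈ U, IsUnit ((hessF z).map Complex.im))
    (W : Set ((Fin n → ℝ) × (Fin n → ℝ))) (hW : IsOpen W)
    (Ψ : (Fin n → ℝ) × (Fin n → ℝ) → (Fin n → ℂ))
    (hΨU : ∀ p ∈ W, Ψ p ∈ U)
    (hΨsmooth : ContDiffOn ℝ (⊤ : ℕ∞) Ψ W)
    (hΨinv : ∀ p ∈ W,
      ((fun i => (Ψ p i).re, fun i => (gradF (Ψ p) i).re) :
        (Fin n → ℝ) × (Fin n → ℝ)) = p) :
    ∀ i j : Fin n, ∀ p ∈ W,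
      pdx (fun q => (gradF (Ψ q) i).im) j p = pdx (fun q => (gradF (Ψ q) j).im) i p := by
  intro i j p hp
  obtain ⟨L, hL, hLA⟩ := hgrad (Ψ p) (hΨU p hp)
  have hLsymm (a b) : a ⬝ᵥ L b = b ⬝ᵥ L a := by
    simpa only [hLA] using dotProduct_mulVec_comm_of_isSymm (hsymm _ (hΨU p hp)) a b
  have hWp : W ∈ 𝓝 p := hW.mem_nhds hp
  exact lagrangian_rel_vx_symm_general (hL.restrictScalars ℝ)
    (fun a b => congrArg Complex.im (hLsymm a b))
    ((hΨsmooth.contDiffAt hWp).differentiableAt (by simp)) (eventually_of_mem hWp hΨinv) i j
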